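/- Let m ∈ ℕ and let (W_i)_{i∈ℕ} be a countable family of prefix-independent Σ⁰₂ objectives over a set of colours C, each with ε-memory ≤ m. Then their union W = ∪_{i∈ℕ} W_i is a prefix-independent Σ⁰₂ objective with ε-memory ≤ m. In other words, prefix-independent Σ⁰₂ objectives with ε-memory ≤ m are closed under countable unions. -/

import Mathlib

universe u v

open Cardinal

/-- A `C`-pregraph on vertex type `V`: a set of coloured directed edges. -/
structure Pregraph (C : Type u) (V : Type u) : Type u where
  Edge : V → C → V → Prop

namespace Pregraph

variable {C V V' : Type u}

/-- A pregraph is a graph when it has no sinks. -/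
def NoSinks (G : Pregraph C V) : Prop :=
  ∀ v : V, ∃ c v', G.Edge v c v'

/-- An infinite path with vertex sequence `π` and colour sequence `γ`. -/
def InfPath (G : Pregraph C V) (π : ℕ → V) (γ : ℕ → C) : Prop :=
  ∀ i, G.Edge (π i) (γ i) (π (i + 1))

/-- A finite path starting at a given vertex, recorded as a list of (colour, target) pairs. -/
def ListPath (G : Pregraph C V) : V → List (C × V) → Prop
  | _, [] => True
  | v, e :: p => G.Edge v e.1 e.2 ∧ G.ListPath e.2 p

/-- Endpoint of a finite path. -/
def pathEnd : V → List (C × V) → V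
  | v, [] => v
  | _, e :: p => pathEnd e.2 p

/-- A pretree: every vertex is reached from the root by a unique finite path. -/
def IsPretree (G : Pregraph C V) (t₀ : V) : Prop :=
  ∀ t : V, ∃! p : List (C × V), G.ListPath t₀ p ∧ pathEnd t₀ p = t

/-- A tree: a pretree without sinks. -/
def IsTree (G : Pregraph C V) (t₀ : V) : Prop :=
  G.NoSinks ∧ G.IsPretree t₀

/-- Morphisms of pregraphs. -/
def IsMorphism (G : Pregraph C V) (H : Pregraph C V') (φ : V → V') : Prop :=
  ∀ ⦃v c v'⦄, G.Edge v c v' → H.Edge (φ v) c (φ v')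

/-- The value of a vertex with respect to a valuation: the supremum of the values of
infinite paths from the vertex. -/
noncomputable def valueAt {X : Type v} [CompleteLinearOrder X]
    (G : Pregraph C V) (val : (ℕ → C) → X) (v : V) : X :=
  sSup {x | ∃ π γ, π 0 = v ∧ G.InfPath π γ ∧ val γ = x}

/-- A vertex satisfies an objective `W` if every infinite path from it has colour
sequence in `W`. -/
def VertexSat (G : Pregraph C V) (W : Set (ℕ → C)) (v : V) : Prop :=
  ∀ π γ, π 0 = v → G.InfPath π γ → γ ∈ W

/-- A pregraph satisfies an objective if all its vertices do. -/
def Sat (G : Pregraph C V) (W : Set (ℕ → C)) : Prop :=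
  ∀ v, G.VertexSat W v

/-- Monotonicity of a pregraph with respect to an order relation `le`:
`u ≥ v →c v' ≥ u'` implies `u →c u'`. -/
def MonotoneRel (G : Pregraph C V) (le : V → V → Prop) : Prop :=
  ∀ ⦃u v c v' u'⦄, le v u → G.Edge v c v' → le u' v' → G.Edge u c u'

end Pregraph

/-- The strict relation associated to `le`. -/
def strictOf {V : Type u} (le : V → V → Prop) : V → V → Prop :=
  fun a b => le a b ∧ a ≠ b

/-- `w' : ℕ → C` is a completion of `w : ℕ → Option C` if the projection of `w`
(deleting all `none`'s, i.e. all ε's) is a prefix of (or equal to) `w'`. -/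
def IsCompletion {C : Type u} (w : ℕ → Option C) (w' : ℕ → C) : Prop :=
  ∀ (k n : ℕ) (h : n < ((List.range k).filterMap w).length),
    ((List.range k).filterMap w).get ⟨n, h⟩ = w' n

/-- The ε-extension of a valuation, where `none` plays the role of ε.
If the projection of `w` is infinite, its unique completion `w'` yields `val w'`;
otherwise this is the infimum of `val` over all completions. -/
noncomputable def epsExtension {C : Type u} {X : Type v} [CompleteLinearOrder X]
    (val : (ℕ → C) → X) : (ℕ → Option C) → X :=
  fun w => sInf {x | ∃ w', IsCompletion w w' ∧ val w' = x}

/-- The ε-extension of an objective. -/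
def epsObjective {C : Type u} (W : Set (ℕ → C)) : Set (ℕ → Option C) :=
  {w | ∃ w', IsCompletion w w' ∧ w' ∈ W}

/-- Strategies: `S` is a graph, `πS` a morphism sending `s₀` to `v₀`, and every Adam move
can be simulated from every state above the corresponding vertex. -/
def IsStrategy {C V VS : Type u} (G : Pregraph C V) (VEve : Set V) (v₀ : V)
    (S : Pregraph C VS) (πS : VS → V) (s₀ : VS) : Prop :=
  S.NoSinks ∧ S.IsMorphism G πS ∧ πS s₀ = v₀ ∧
    ∀ v, v ∉ VEve → ∀ c v', G.Edge v c v' →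
      ∀ s, πS s = v → ∃ s', πS s' = v' ∧ S.Edge s c s'

/-- The value of a game: the infimum of the values of its strategies. -/
noncomputable def gameValue {C V : Type u} {X : Type v} [CompleteLinearOrder X]
    (G : Pregraph C V) (VEve : Set V) (v₀ : V) (val : (ℕ → C) → X) : X :=
  sInf {x | ∃ (VS : Type u) (S : Pregraph C VS) (πS : VS → V) (s₀ : VS),
    IsStrategy G VEve v₀ S πS s₀ ∧ S.valueAt val s₀ = x}

/-- An ε-strategy: a product strategy over `M` (vertices form a subset `D ⊆ V × M`,
projection is the first component) whose ε-edges do not update the memory. -/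
def IsEpsStrategy {C V M : Type u} (G : Pregraph (Option C) V) (VEve : Set V) (v₀ : V)
    (D : Set (V × M)) (S : Pregraph (Option C) ↥D) (s₀ : ↥D) : Prop :=
  IsStrategy G VEve v₀ S (fun s => (s : V × M).1) s₀ ∧
    ∀ s s' : ↥D, S.Edge s none s' → (s : V × M).2 = (s' : V × M).2

/-- A product strategy is chromatic if memory updates only depend on the current memory
state and the colour read. -/
def IsChromaticStrat {C V M : Type u} (D : Set (V × M)) (S : Pregraph C ↥D) : Prop :=
  ∃ δ : M → C → M, ∀ (s s' : ↥D) (c : C), S.Edge s c s' → (s' : V × M).2 = δ (s : V × M).2 c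

/-- ε-separated monotone graph over `M` (with `part` the partition into fibres):
`v ≤ v' ↔ v' →ε v` is a partial order making the graph monotone, ε-edges stay inside
fibres, and each fibre is totally ordered. -/
structure IsEpsSeparated {C V M : Type u} (U : Pregraph (Option C) V) (part : V → M) : Prop where
  refl : ∀ v, U.Edge v none v
  antisymm : ∀ ⦃v v'⦄, U.Edge v none v' → U.Edge v' none v → v = v'
  mono : ∀ ⦃u v c v' u'⦄, U.Edge u none v → U.Edge v c v' → U.Edge v' none u' → U.Edge u c u'
  sameFiber : ∀ ⦃v v'⦄, U.Edge v none v' → part v = part v'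
  total : ∀ ⦃v v'⦄, part v = part v' → U.Edge v none v' ∨ U.Edge v' none v

/-- Well-foundedness of the order `v ≤ v' ↔ v' →ε v` of an ε-separated graph. -/
def EpsWellFounded {C V : Type u} (U : Pregraph (Option C) V) : Prop :=
  WellFounded (fun v v' => U.Edge v' none v ∧ v ≠ v')

/-- A chromatic ε-separated graph: colours act uniformly on the parts. -/
def IsChromaticGraph {C V M : Type u} (U : Pregraph (Option C) V) (part : V → M) : Prop :=
  ∃ δ : M → C → M, ∀ ⦃v c v'⦄, U.Edge v (some c) v' → part v' = δ (part v) c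

/-- `(κ, val)`-universality for a valuation: every tree of cardinality `< κ` maps into `U`
by a morphism preserving the value at the root. -/
def IsUniversal {C VU : Type u} {X : Type v} [CompleteLinearOrder X]
    (κ : Cardinal.{u}) (val : (ℕ → C) → X) (U : Pregraph C VU) : Prop :=
  ∀ (VT : Type u) (T : Pregraph C VT) (t₀ : VT), T.IsTree t₀ → #VT < κ →
    ∃ φ : VT → VU, T.IsMorphism U φ ∧ U.valueAt val (φ t₀) ≤ T.valueAt val t₀

/-- A valuation has ε-memory ≤ μ: in every ε-game, the value is attained by an ε-strategy
of memory ≤ μ. -/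
def HasEpsMemLE {C : Type u} {X : Type v} [CompleteLinearOrder X]
    (val : (ℕ → C) → X) (μ : Cardinal.{u}) : Prop :=
  ∀ (V : Type u) (G : Pregraph (Option C) V), G.NoSinks → ∀ (VEve : Set V) (v₀ : V),
    ∃ (M : Type u) (D : Set (V × M)) (S : Pregraph (Option C) ↥D) (s₀ : ↥D),
      #M ≤ μ ∧ IsEpsStrategy G VEve v₀ D S s₀ ∧
      S.valueAt (epsExtension val) s₀ ≤ gameValue G VEve v₀ (epsExtension val)

/-- Prepending a finite word to an infinite word. -/
def listAppend {C : Type u} (u : List C) (w : ℕ → C) : ℕ → C :=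
  fun n => if h : n < u.length then u.get ⟨n, h⟩ else w (n - u.length)

/-- An objective is prefix-independent when it is invariant under adding/removing
finite prefixes. -/
def PrefixIndependent {C : Type u} (W : Set (ℕ → C)) : Prop :=
  ∀ (u : List C) (w : ℕ → C), listAppend u w ∈ W ↔ w ∈ W

/-- Eve wins a game with objective `W`: there exists a winning strategy. -/
def EveWins {C V : Type u} (G : Pregraph C V) (VEve : Set V) (v₀ : V)
    (W : Set (ℕ → C)) : Prop :=
  ∃ (VS : Type u) (S : Pregraph C VS) (πS : VS → V) (s₀ : VS),
    IsStrategy G VEve v₀ S πS s₀ ∧ S.VertexSat W s₀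

/-- An objective has ε-memory ≤ μ: in every ε-game that Eve wins, she has a winning
ε-strategy of memory ≤ μ. -/
def ObjEpsMemLE {C : Type u} (W : Set (ℕ → C)) (μ : Cardinal.{u}) : Prop :=
  ∀ (V : Type u) (G : Pregraph (Option C) V), G.NoSinks → ∀ (VEve : Set V) (v₀ : V),
    EveWins G VEve v₀ (epsObjective W) →
    ∃ (M : Type u) (D : Set (V × M)) (S : Pregraph (Option C) ↥D) (s₀ : ↥D),
      #M ≤ μ ∧ IsEpsStrategy G VEve v₀ D S s₀ ∧ S.VertexSat (epsObjective W) s₀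

/-- An objective has ε-memory < μ: in every ε-game that Eve wins, she has a winning
ε-strategy of memory < μ. -/
def ObjEpsMemLT {C : Type u} (W : Set (ℕ → C)) (μ : Cardinal.{u}) : Prop :=
  ∀ (V : Type u) (G : Pregraph (Option C) V), G.NoSinks → ∀ (VEve : Set V) (v₀ : V),
    EveWins G VEve v₀ (epsObjective W) →
    ∃ (M : Type u) (D : Set (V × M)) (S : Pregraph (Option C) ↥D) (s₀ : ↥D),
      #M < μ ∧ IsEpsStrategy G VEve v₀ D S s₀ ∧ S.VertexSat (epsObjective W) s₀

/-- The prefix of length `k` of an infinite word. -/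
def prefixWord {C : Type u} (w : ℕ → C) (k : ℕ) : List C :=
  List.ofFn (fun i : Fin k => w i)

/-- Σ⁰₂ objectives: those of the form "only finitely many prefixes belong to `L`". -/
def IsSigmaTwo {C : Type u} (W : Set (ℕ → C)) : Prop :=
  ∃ L : Set (List C), W = {w | {k | prefixWord w k ∈ L}.Finite}

/-!
Let Eve win an `ε`-game for `⋃ i, W i` and let `T` be obtained from a winning strategy by
contracting its `ε`-edges, so that `T` satisfies `⋃ i, W i`. Each `W i` is a countable union of
closed sets, so by a Baire category argument some vertex of every nonempty part of `T` satisfies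
a single `W i`. Peeling off such vertices ordinal after ordinal ranks `T`: ranks do not increase
along edges, and each layer satisfies one `W i`.

Memory enters through a game on a layer: Adam moves a token along the edges and may at any time
offer Eve a set containing the current vertex, from which she chooses a new one, by `ε`-edges.
She wins by never changing the vertex, hence she also wins with an `ε`-strategy of memory `≤ μ`.
As that strategy keeps its memory `k` along `ε`-edges, its choices amount to a well-ordered
peeling of the vertices for each `k`. This simulates the layer in a graph with `μ` well-ordered
fibres satisfying `W i`, on which larger elements have more outgoing edges and fewer incoming ones.
The lexicographic sum of these graphs over all layers satisfies `⋃ i, W i`, because a path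
eventually stays in one layer. In the original game, Eve plays by `ε`-memory `≤ μ` when she
remembers the fibre and assumes the least possible element of it.
-/

open Relation (ReflTransGen TransGen)

section Words

variable {C : Type u}

@[simp]
theorem length_prefixWord (w : ℕ → C) (k : ℕ) : (prefixWord w k).length = k :=
  List.length_ofFn

theorem prefixWord_succ (w : ℕ → C) (k : ℕ) : prefixWord w (k + 1) = prefixWord w k ++ [w k] := by
  rw [prefixWord, List.ofFn_succ_last]
  rfl

theorem prefix_prefixWord_iff {w : ℕ → C} {v : List C} {k : ℕ} :
    v <+: prefixWord w k ↔ ∃ j ≤ k, v = prefixWord w j := by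
  induction k with
  | zero => simp [prefixWord]
  | succ k ih =>
    rw [prefixWord_succ, List.prefix_concat_iff, ih, ← prefixWord_succ]
    simp only [Nat.le_succ_iff, or_and_right, exists_or, exists_eq_left]
    exact or_comm

theorem prefixWord_listAppend (u : List C) (w : ℕ → C) (d : ℕ) :
    prefixWord (listAppend u w) (u.length + d) = u ++ prefixWord w d := by
  apply List.ext_getElem
  · simp
  · intro i _ _
    simp only [prefixWord, List.getElem_ofFn, listAppend, List.getElem_append, List.get_eq_getElem]

theorem listAppend_prefixWord (w : ℕ → C) (n : ℕ) :
    listAppend (prefixWord w n) (fun i => w (i + n)) = w := by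
  funext i
  by_cases hi : i < n
  · simp [listAppend, prefixWord, hi]
  · simp [listAppend, hi, Nat.sub_add_cancel (not_lt.1 hi)]

namespace PrefixIndependent

variable {W : Set (ℕ → C)}

theorem shift_mem_iff (hW : PrefixIndependent W) (w : ℕ → C) (n : ℕ) :
    (fun i => w (i + n)) ∈ W ↔ w ∈ W := by
  rw [← hW (prefixWord w n), listAppend_prefixWord]

theorem mem_iff_of_eventually_eq (hW : PrefixIndependent W) {w w' : ℕ → C} {N : ℕ}
    (h : ∀ n ≥ N, w n = w' n) : w ∈ W ↔ w' ∈ W := by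
  rw [← hW.shift_mem_iff w N, ← hW.shift_mem_iff w' N]
  simp only [h _ (Nat.le_add_left N _)]

theorem iUnion {ι : Sort*} {W : ι → Set (ℕ → C)} (hW : ∀ i, PrefixIndependent (W i)) :
    PrefixIndependent (⋃ i, W i) := fun u w => by
  simp only [Set.mem_iUnion, hW _ u w]

end PrefixIndependent

end Words

section SigmaTwo

variable {C : Type u}

theorem finite_jumps_iff_bddAbove {a : ℕ → ℕ} (ha : Monotone a) :
    {k | a k ≠ a (k + 1)}.Finite ↔ BddAbove (Set.range a) := by
  constructor
  · intro hfin
    obtain ⟨N, hN⟩ := hfin.bddAbove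
    have hconst : ∀ k ≥ N + 1, a k = a (N + 1) := by
      intro k hk
      induction k, hk using Nat.le_induction with
      | base => rfl
      | succ k hk ih =>
        by_contra hne
        exact absurd (hN (show k ∈ {k | a k ≠ a (k + 1)} from fun h => hne (h ▸ ih))) (by lia)
    refine ⟨a (N + 1), Set.forall_mem_range.2 fun k => ?_⟩
    rcases le_total k (N + 1) with h | h
    exacts [ha h, (hconst k h).le]
  · rintro ⟨b, hb⟩
    refine Set.Finite.of_injOn (f := a) (t := Set.Iic b) (fun k _ => hb ⟨k, rfl⟩) ?_
      (Set.finite_Iic b)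
    intro k hk l hl hkl
    by_contra hne
    rcases lt_or_gt_of_ne hne with h | h
    · exact (((ha (Nat.le_succ k)).lt_of_ne hk).trans_le (ha h)).ne hkl
    · exact (((ha (Nat.le_succ l)).lt_of_ne hl).trans_le (ha h)).ne' hkl

/-- The least index `n` for which no prefix of `u` lies in `B n`, capped at the length of `u`
so that the minimum is over a nonempty set. -/
noncomputable def firstAvoiding (B : ℕ → Set (List C)) (u : List C) : ℕ :=
  sInf {n | u.length ≤ n ∨ ∀ v, v <+: u → v ∉ B n}

theorem firstAvoiding_mono (B : ℕ → Set (List C)) {u v : List C} (h : u <+: v) :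
    firstAvoiding B u ≤ firstAvoiding B v := by
  refine csInf_le_csInf' ⟨v.length, Or.inl le_rfl⟩ ?_
  rintro n (hn | hn)
  exacts [Or.inl (h.length_le.trans hn), Or.inr fun x hx => hn x (hx.trans h)]

theorem notMem_of_firstAvoiding_lt {B : ℕ → Set (List C)} {u v : List C}
    (hu : firstAvoiding B u < u.length) (hv : v <+: u) : v ∉ B (firstAvoiding B u) :=
  (Nat.sInf_mem (s := {n | u.length ≤ n ∨ ∀ v, v <+: u → v ∉ B n}) ⟨_, Or.inl le_rfl⟩).resolve_left
    hu.not_ge v hv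

theorem bddAbove_firstAvoiding_iff {B : ℕ → Set (List C)} {w : ℕ → C} :
    BddAbove (Set.range fun k => firstAvoiding B (prefixWord w k)) ↔
      ∃ n, ∀ k, prefixWord w k ∉ B n := by
  constructor
  · rintro ⟨b, hb⟩
    by_contra! h
    choose k hk using h
    obtain ⟨K, hK⟩ := ((Set.finite_Iic b).image k).bddAbove
    set l := max K (b + 1)
    have hle : firstAvoiding B (prefixWord w l) ≤ b := hb ⟨l, rfl⟩
    have hlen : firstAvoiding B (prefixWord w l) < (prefixWord w l).length := by
      rw [length_prefixWord]
      exact hle.trans_lt (le_max_right K (b + 1))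
    exact notMem_of_firstAvoiding_lt hlen (prefix_prefixWord_iff.2
      ⟨_, (hK (Set.mem_image_of_mem k hle)).trans (le_max_left _ _), rfl⟩) (hk _)
  · rintro ⟨n, hn⟩
    refine ⟨n, Set.forall_mem_range.2 fun k => Nat.sInf_le (Or.inr fun v hv => ?_)⟩
    obtain ⟨j, -, rfl⟩ := prefix_prefixWord_iff.1 hv
    exact hn j

theorem isSigmaTwo_iff {W : Set (ℕ → C)} :
    IsSigmaTwo W ↔ ∃ B : ℕ → Set (List C), W = {w | ∃ n, ∀ k, prefixWord w k ∉ B n} := by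
  constructor
  · rintro ⟨L, rfl⟩
    refine ⟨fun n => {u | u ∈ L ∧ n ≤ u.length}, ?_⟩
    ext w
    simp only [Set.mem_ofPred_eq, length_prefixWord, not_and, not_le]
    refine ⟨fun h => ?_, fun ⟨n, hn⟩ => (Set.finite_Iio n).subset hn⟩
    obtain ⟨N, hN⟩ := h.bddAbove
    exact ⟨N + 1, fun k hk => Nat.lt_succ_of_le (hN hk)⟩
  · rintro ⟨B, rfl⟩
    refine ⟨{u | firstAvoiding B u.dropLast ≠ firstAvoiding B u}, ?_⟩
    ext w
    have hmono : Monotone fun k => firstAvoiding B (prefixWord w k) := fun k l hkl =>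
      firstAvoiding_mono B (prefix_prefixWord_iff.2 ⟨k, hkl, rfl⟩)
    have hjumps : {k | prefixWord w k ∈ {u | firstAvoiding B u.dropLast ≠ firstAvoiding B u}} =
        Nat.succ '' {k | firstAvoiding B (prefixWord w k) ≠
          firstAvoiding B (prefixWord w (k + 1))} := by
      ext k
      cases k with
      | zero => simp [prefixWord]
      | succ k => simp [prefixWord_succ]
    rw [Set.mem_ofPred_eq, Set.mem_ofPred_eq, hjumps, Set.finite_image_iff Nat.succ_injective.injOn,
      finite_jumps_iff_bddAbove hmono, bddAbove_firstAvoiding_iff]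

theorem IsSigmaTwo.iUnion {ι : Type*} [Countable ι] {W : ι → Set (ℕ → C)}
    (hW : ∀ i, IsSigmaTwo (W i)) : IsSigmaTwo (⋃ i, W i) := by
  choose B hB using fun i => isSigmaTwo_iff.1 (hW i)
  refine isSigmaTwo_iff.2 ?_
  cases isEmpty_or_nonempty ι
  · exact ⟨fun _ => Set.univ, by simp⟩
  obtain ⟨e, he⟩ := exists_surjective_nat (ι × ℕ)
  refine ⟨fun n => B (e n).1 (e n).2, ?_⟩
  ext w
  simp only [Set.mem_iUnion, hB, Set.mem_ofPred_eq]
  rw [← Prod.exists', he.exists]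

end SigmaTwo

section Interpolation

variable {Q : Type*} {Step : Q → Q → Prop}

theorem exists_path_of_transGen {q q' : Q} (h : TransGen Step q q') :
    ∃ (l : ℕ) (p : ℕ → Q), p 0 = q ∧ p (l + 1) = q' ∧ ∀ i ≤ l, Step (p i) (p (i + 1)) := by
  induction h using TransGen.head_induction_on with
  | @single a hstep =>
    refine ⟨0, fun i => Nat.casesOn i a fun _ => q', rfl, rfl, fun i hi => ?_⟩
    obtain rfl := Nat.le_zero.1 hi
    exact hstep
  | @head a b hstep _ ih =>
    obtain ⟨l, p, rfl, rfl, hp⟩ := ih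
    refine ⟨l + 1, fun i => Nat.casesOn i a p, rfl, rfl, fun i hi => ?_⟩
    cases i with
    | zero => exact hstep
    | succ i => exact hp i (Nat.le_of_succ_le_succ hi)

theorem exists_consecutive_blocks (l : ℕ → ℕ) :
    ∃ (q : ℕ → ℕ × ℕ) (n : ℕ → ℕ), StrictMono n ∧ n 0 = 0 ∧ (∀ j, q (n j) = (j, 0)) ∧
      ∀ i, (q i).2 < l (q i).1 ∧ q (i + 1) = ((q i).1, (q i).2 + 1) ∨
        (q i).2 = l (q i).1 ∧ q (i + 1) = ((q i).1 + 1, 0) := by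
  let next : ℕ × ℕ → ℕ × ℕ := fun q => if q.2 < l q.1 then (q.1, q.2 + 1) else (q.1 + 1, 0)
  let n : ℕ → ℕ := fun j => ∑ i ∈ Finset.range j, (l i + 1)
  have hn : ∀ j, n (j + 1) = (l j + 1) + n j := fun j =>
    (Finset.sum_range_succ (fun i => l i + 1) j).trans (add_comm _ _)
  have hinner : ∀ j, ∀ r ≤ l j, next^[r] (j, 0) = (j, r) := by
    intro j r hr
    induction r with
    | zero => rfl
    | succ r ih =>
      rw [Function.iterate_succ_apply', ih (Nat.le_of_succ_le hr)]
      exact if_pos hr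
  have hpos : ∀ j, next^[n j] (0, 0) = (j, 0) := by
    intro j
    induction j with
    | zero => rfl
    | succ j ih =>
      rw [hn, Function.iterate_add_apply, ih, Function.iterate_succ_apply', hinner j _ le_rfl]
      exact if_neg (lt_irrefl _)
  have hle : ∀ i, (next^[i] (0, 0)).2 ≤ l (next^[i] (0, 0)).1 := by
    intro i
    induction i with
    | zero => exact Nat.zero_le _
    | succ i _ =>
      rw [Function.iterate_succ_apply']
      dsimp only [next]
      split_ifs with hlt
      exacts [hlt, Nat.zero_le _]
  refine ⟨fun i => next^[i] (0, 0), n, strictMono_nat_of_lt_succ fun j => by grind, rfl, hpos,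
    fun i => ?_⟩
  simp only [Function.iterate_succ_apply']
  rcases (hle i).lt_or_eq with hlt | heq
  exacts [Or.inl ⟨hlt, if_pos hlt⟩, Or.inr ⟨heq, if_neg heq.not_lt⟩]

theorem exists_seq_interpolating {g : ℕ → Q} (h : ∀ j, TransGen Step (g j) (g (j + 1))) :
    ∃ (f : ℕ → Q) (n : ℕ → ℕ), StrictMono n ∧ n 0 = 0 ∧ (∀ i, Step (f i) (f (i + 1))) ∧
      ∀ j, f (n j) = g j := by
  choose l p hfirst hlast hstep using fun j => exists_path_of_transGen (h j)
  obtain ⟨q, n, hmono, hzero, hstart, hnext⟩ := exists_consecutive_blocks l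
  refine ⟨fun i => p (q i).1 (q i).2, n, hmono, hzero, fun i => ?_, fun j => ?_⟩
  · rcases hnext i with ⟨hlt, hq⟩ | ⟨heq, hq⟩
    · simpa only [hq] using hstep _ _ hlt.le
    · simpa only [hq, heq, hlast, hfirst] using hstep (q i).1 _ le_rfl
  · simp only [hstart, hfirst]

end Interpolation

section EpsWords

variable {C : Type u} {w : ℕ → Option C}

/-- The number of letters (non-`ε` symbols) among the first `k` symbols of an `ε`-word. -/
def letterCount (w : ℕ → Option C) (k : ℕ) : ℕ :=
  Nat.count (fun i => (w i).isSome) k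

theorem letterCount_succ_of_eq_none {k : ℕ} (h : w k = none) :
    letterCount w (k + 1) = letterCount w k := by
  simp [letterCount, Nat.count_succ, h]

theorem letterCount_succ_of_eq_some {k : ℕ} {c : C} (h : w k = some c) :
    letterCount w (k + 1) = letterCount w k + 1 := by
  simp [letterCount, Nat.count_succ, h]

theorem letterCount_mono (w : ℕ → Option C) : Monotone (letterCount w) :=
  Nat.count_monotone _

theorem eq_of_letterCount_eq {i j : ℕ} {c d : C} (hi : w i = some c) (hj : w j = some d)
    (h : letterCount w i = letterCount w j) : i = j :=
  Nat.count_injective (p := fun i => (w i).isSome) (by simp [hi]) (by simp [hj]) h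

theorem exists_letter_of_lt_letterCount {j k : ℕ} (h : j < letterCount w k) :
    ∃ i c, w i = some c ∧ letterCount w i = j := by
  induction k with
  | zero => simp [letterCount] at h
  | succ k ih =>
    cases hk : w k with
    | none => exact ih (letterCount_succ_of_eq_none hk ▸ h)
    | some c =>
      rcases (Nat.lt_succ_iff_lt_or_eq.1 (letterCount_succ_of_eq_some hk ▸ h)) with hlt | heq
      exacts [ih hlt, ⟨k, c, hk, heq.symm⟩]

theorem length_filterMap_range (w : ℕ → Option C) (k : ℕ) :
    ((List.range k).filterMap w).length = letterCount w k := by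
  induction k with
  | zero => rfl
  | succ k ih =>
    rw [List.range_succ, List.filterMap_append, List.length_append, ih]
    cases hk : w k with
    | none => simp [hk, letterCount_succ_of_eq_none]
    | some c => simp [hk, letterCount_succ_of_eq_some hk]

theorem isCompletion_iff {w' : ℕ → C} :
    IsCompletion w w' ↔ ∀ i c, w i = some c → w' (letterCount w i) = c := by
  simp only [IsCompletion, List.get_eq_getElem]
  constructor
  · intro h i c hi
    have hlt : letterCount w i < ((List.range (i + 1)).filterMap w).length := by
      rw [length_filterMap_range, letterCount_succ_of_eq_some hi]
      exact Nat.lt_succ_self _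
    rw [← h (i + 1) _ hlt]
    simp [List.range_succ, hi, ← length_filterMap_range]
  · intro h k
    induction k with
    | zero => simp
    | succ k ih =>
      intro n hn
      cases hk : w k with
      | none => simpa [List.range_succ, hk] using ih n (by simpa [List.range_succ, hk] using hn)
      | some c =>
        simp only [List.range_succ, List.filterMap_append, List.getElem_append]
        split_ifs with hlt
        · exact ih n hlt
        · have hn' : n = letterCount w k := by
            rw [length_filterMap_range] at hlt hn
            rw [letterCount_succ_of_eq_some hk] at hn
            lia
          simp [hk, hn', h k c hk]

theorem exists_isCompletion (w : ℕ → Option C) (x : ℕ → C) :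
    ∃ w', IsCompletion w w' ∧ ∀ n, (∀ k, letterCount w k ≤ n) → w' n = x n := by
  have hletter : ∀ n, ∃ c, (∀ i d, w i = some d → letterCount w i = n → c = d) ∧
      ((∀ k, letterCount w k ≤ n) → c = x n) := by
    intro n
    by_cases hn : ∃ k, n < letterCount w k
    · obtain ⟨k, hk⟩ := hn
      obtain ⟨i, c, hi, rfl⟩ := exists_letter_of_lt_letterCount hk
      refine ⟨c, fun j d hj hij => ?_, fun h => absurd hk (h k).not_gt⟩
      obtain rfl := eq_of_letterCount_eq hj hi hij
      exact Option.some_injective _ (hi.symm.trans hj)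
    · push Not at hn
      refine ⟨x n, fun i d hi hin => absurd (hn (i + 1)) ?_, fun _ => rfl⟩
      rw [letterCount_succ_of_eq_some hi]
      lia
  choose w' hw' hx using hletter
  exact ⟨w', isCompletion_iff.2 fun i c hi => hw' _ i c hi rfl, hx⟩

end EpsWords

namespace Pregraph

section Satisfaction

variable {C V V' : Type u} {G : Pregraph C V} {H : Pregraph C V'} {W : Set (ℕ → C)} {v v' : V}

theorem InfPath.cons {π : ℕ → V} {γ : ℕ → C} {c : C} (hp : G.InfPath π γ)
    (h : G.Edge v c (π 0)) :
    G.InfPath (fun i => Nat.casesOn i v π) (fun i => Nat.casesOn i c γ)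
  | 0 => h
  | i + 1 => hp i

theorem NoSinks.exists_infPath (hG : G.NoSinks) (v : V) : ∃ π γ, π 0 = v ∧ G.InfPath π γ := by
  choose c next hnext using hG
  refine ⟨fun i => next^[i] v, fun i => c (next^[i] v), rfl, fun i => ?_⟩
  simpa only [Function.iterate_succ_apply'] using hnext (next^[i] v)

theorem VertexSat.of_isMorphism {φ : V → V'} (hφ : G.IsMorphism H φ)
    (h : H.VertexSat W (φ v)) : G.VertexSat W v := fun π γ h0 hp =>
  h (φ ∘ π) γ (congrArg φ h0) fun i => hφ (hp i)

theorem VertexSat.of_edge (hW : PrefixIndependent W) {c : C} (h : G.VertexSat W v)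
    (he : G.Edge v c v') : G.VertexSat W v' := fun _ _ h0 hp =>
  (hW.shift_mem_iff _ 1).2 (h _ _ rfl (hp.cons (h0 ▸ he)))

theorem VertexSat.of_edge_imp (h : G.VertexSat W v) (hvv' : ∀ c x, G.Edge v' c x → G.Edge v c x) :
    G.VertexSat W v' := fun π γ h0 hp => by
  refine h (fun i => Nat.casesOn i v fun j => π (j + 1)) γ rfl fun i => ?_
  cases i with
  | zero => exact hvv' _ _ (h0 ▸ hp 0)
  | succ i => exact hp (i + 1)

/-- The pregraph induced on a set of vertices. -/
def restrict (G : Pregraph C V) (Z : Set V) : Pregraph C ↥Z where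
  Edge v c v' := G.Edge v c v'

theorem VertexSat.restrict {Z : Set V} (hv : v ∈ Z) (h : G.VertexSat W v) :
    (G.restrict Z).VertexSat W ⟨v, hv⟩ :=
  VertexSat.of_isMorphism (H := G) (φ := (↑)) (fun _ _ _ he => he) h

end Satisfaction

section EpsContraction

variable {C V : Type u} {S : Pregraph (Option C) V} {W : Set (ℕ → C)} {s s' : V}

/-- The edges of an `ε`-pregraph coloured by a letter, preceded by any number of `ε`-edges. -/
def epsContraction (S : Pregraph (Option C) V) : Pregraph C V where
  Edge s c s' := ∃ a, ReflTransGen (S.Edge · none ·) s a ∧ S.Edge a (some c) s'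

theorem InfPath.reflTransGen_of_letterCount_eq {π : ℕ → V} {w : ℕ → Option C} (hp : S.InfPath π w)
    {a b : ℕ} (hab : a ≤ b) (h : letterCount w a = letterCount w b) :
    ReflTransGen (S.Edge · none ·) (π a) (π b) := by
  induction b, hab using Nat.le_induction with
  | base => exact .refl
  | succ b hab ih =>
    have hb := letterCount_mono w hab
    cases hwb : w b with
    | none => exact (ih (h.trans (letterCount_succ_of_eq_none hwb))).tail (hwb ▸ hp b)
    | some c =>
      rw [letterCount_succ_of_eq_some hwb] at h
      lia

theorem InfPath.exists_epsContraction {π : ℕ → V} {w : ℕ → Option C} (hp : S.InfPath π w)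
    (hw : ∀ n, ∃ k, n < letterCount w k) :
    ∃ π' γ, π' 0 = π 0 ∧ S.epsContraction.InfPath π' γ ∧ IsCompletion w γ := by
  choose pos γ hγ hcount using fun n => exists_letter_of_lt_letterCount (hw n).choose_spec
  have hcount' : ∀ j, letterCount w (pos j + 1) = j + 1 := fun j => by
    rw [letterCount_succ_of_eq_some (hγ j), hcount]
  refine ⟨fun j => Nat.casesOn j (π 0) fun i => π (pos i + 1), γ, rfl, fun j => ?_,
    isCompletion_iff.2 fun i c hi => ?_⟩
  · have he : S.Edge (π (pos j)) (some (γ j)) (π (pos j + 1)) := hγ j ▸ hp (pos j)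
    refine ⟨π (pos j), ?_, he⟩
    cases j with
    | zero => exact hp.reflTransGen_of_letterCount_eq (Nat.zero_le _) (hcount 0).symm
    | succ j =>
      refine hp.reflTransGen_of_letterCount_eq ?_ ((hcount' j).trans (hcount (j + 1)).symm)
      by_contra hlt
      have hle := letterCount_mono w (Nat.le_of_lt_succ (not_le.1 hlt))
      rw [hcount, hcount] at hle
      lia
  · have hpos : pos (letterCount w i) = i := eq_of_letterCount_eq (hγ _) hi (hcount _)
    exact Option.some_injective _ ((hγ _).symm.trans ((congrArg w hpos).trans hi))

theorem InfPath.exists_of_epsContraction {π : ℕ → V} {γ : ℕ → C}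
    (hp : S.epsContraction.InfPath π γ) :
    ∃ π' w, π' 0 = π 0 ∧ S.InfPath π' w ∧ ∀ w', IsCompletion w w' → w' = γ := by
  let Step : ℕ × V → ℕ × V → Prop := fun q q' => ∃ o, S.Edge q.2 o q'.2 ∧
    (o = none ∧ q'.1 = q.1 ∨ o = some (γ q.1) ∧ q'.1 = q.1 + 1)
  have hreach : ∀ j, TransGen Step (j, π j) (j + 1, π (j + 1)) := by
    intro j
    obtain ⟨a, ha, he⟩ := hp j
    exact .tail' (ha.lift (j, ·) fun _ _ h => ⟨none, h, .inl ⟨rfl, rfl⟩⟩)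
      ⟨some (γ j), he, .inr ⟨rfl, rfl⟩⟩
  obtain ⟨f, n, -, hzero, hstep, hf⟩ := exists_seq_interpolating hreach
  choose w hw hlevel using hstep
  have h0 : f 0 = (0, π 0) := by rw [← hf 0, hzero]
  have hcount : ∀ i, letterCount w i = (f i).1 := by
    intro i
    induction i with
    | zero => simp [h0, letterCount]
    | succ i ih =>
      rcases hlevel i with ⟨ho, hi⟩ | ⟨ho, hi⟩
      · rw [letterCount_succ_of_eq_none ho, ih, hi]
      · rw [letterCount_succ_of_eq_some ho, ih, hi]
  refine ⟨fun i => (f i).2, w, congrArg Prod.snd h0, hw, fun w' hw' => funext fun j => ?_⟩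
  have hlt : j < letterCount w (n (j + 1)) := by
    rw [hcount, hf]
    exact Nat.lt_succ_self j
  obtain ⟨i, c, hi, rfl⟩ := exists_letter_of_lt_letterCount hlt
  rw [isCompletion_iff.1 hw' i c hi, hcount]
  rcases hlevel i with ⟨ho, -⟩ | ⟨ho, -⟩
  · simp [ho] at hi
  · exact Option.some_injective _ (hi.symm.trans ho)

theorem VertexSat.epsContraction (h : S.VertexSat (epsObjective W) s) :
    S.epsContraction.VertexSat W s := fun π γ h0 hp => by
  obtain ⟨π', w, hπ', hp', hw⟩ := hp.exists_of_epsContraction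
  obtain ⟨w', hcompl, hw'⟩ := h π' w (hπ'.trans h0) hp'
  exact hw w' hcompl ▸ hw'

theorem VertexSat.of_epsContraction (hW : PrefixIndependent W) (hne : W.Nonempty)
    (h : S.epsContraction.VertexSat W s) : S.VertexSat (epsObjective W) s := fun π w h0 hp => by
  by_cases hw : ∀ n, ∃ k, n < letterCount w k
  · obtain ⟨π', γ, hπ', hp', hγ⟩ := hp.exists_epsContraction hw
    exact ⟨γ, hγ, h π' γ (hπ'.trans h0) hp'⟩
  · push Not at hw
    obtain ⟨N, hN⟩ := hw
    obtain ⟨x, hx⟩ := hne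
    obtain ⟨w', hcompl, hw'⟩ := exists_isCompletion w x
    exact ⟨w', hcompl, (hW.mem_iff_of_eventually_eq fun n hn =>
      hw' n fun k => (hN k).trans hn).2 hx⟩

theorem VertexSat.epsObjective_of_edge (hW : PrefixIndependent W) (hne : W.Nonempty)
    {o : Option C} (h : S.VertexSat (epsObjective W) s) (he : S.Edge s o s') :
    S.VertexSat (epsObjective W) s' := by
  refine .of_epsContraction hW hne ?_
  cases o with
  | none => exact h.epsContraction.of_edge_imp fun c x ⟨a, ha, hax⟩ => ⟨a, .head he ha, hax⟩
  | some c => exact h.epsContraction.of_edge hW ⟨s, .refl, he⟩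

end EpsContraction

end Pregraph

section Strategies

variable {C V VS : Type u}

theorem IsStrategy.restrict {G : Pregraph C V} {VEve : Set V} {v₀ : V} {S : Pregraph C VS}
    {π : VS → V} {s₀ : VS} (hS : IsStrategy G VEve v₀ S π s₀) {Z : Set VS}
    (hZ : ∀ s ∈ Z, ∀ c s', S.Edge s c s' → s' ∈ Z) (h₀ : s₀ ∈ Z) :
    IsStrategy G VEve v₀ (S.restrict Z) (fun s => π s) ⟨s₀, h₀⟩ := by
  obtain ⟨hsinks, hmorph, hstart, hadam⟩ := hS
  refine ⟨fun s => ?_, fun _ _ _ he => hmorph he, hstart, fun v hv c v' he s hs => ?_⟩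
  · obtain ⟨c, s', he⟩ := hsinks s
    exact ⟨c, ⟨s', hZ s s.2 c s' he⟩, he⟩
  · obtain ⟨s', hs', he'⟩ := hadam v hv c v' he s hs
    exact ⟨⟨s', hZ s s.2 c s' he'⟩, hs', he'⟩

variable {G : Pregraph (Option C) V} {VEve : Set V} {v₀ : V} {W : Set (ℕ → C)}

theorem IsStrategy.restrict_vertexSat {S : Pregraph (Option C) VS} {π : VS → V} {s₀ : VS}
    (hS : IsStrategy G VEve v₀ S π s₀) (hW : PrefixIndependent W) (hne : W.Nonempty)
    (hwin : S.VertexSat (epsObjective W) s₀) :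
    IsStrategy G VEve v₀ (S.restrict {s | S.VertexSat (epsObjective W) s}) (fun s => π s)
      ⟨s₀, hwin⟩ :=
  hS.restrict (fun _ hs _ _ he => hs.epsObjective_of_edge hW hne he) hwin

theorem EveWins.exists_strategy_sat (h : EveWins G VEve v₀ (epsObjective W))
    (hW : PrefixIndependent W) (hne : W.Nonempty) :
    ∃ (VS : Type u) (S : Pregraph (Option C) VS) (π : VS → V) (s₀ : VS),
      IsStrategy G VEve v₀ S π s₀ ∧ S.Sat (epsObjective W) := by
  obtain ⟨VS, S, π, s₀, hS, hwin⟩ := h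
  exact ⟨_, _, _, _, hS.restrict_vertexSat hW hne hwin, fun s => s.2.restrict s.2⟩

theorem ObjEpsMemLE.exists_strategy_sat {μ : Cardinal.{u}} (hmem : ObjEpsMemLE W μ)
    (hW : PrefixIndependent W) (hne : W.Nonempty) {K : Type u} (hK : μ ≤ #K) (hG : G.NoSinks)
    (h : EveWins G VEve v₀ (epsObjective W)) :
    ∃ (VS : Type u) (S : Pregraph (Option C) VS) (π : VS → V) (mem : VS → K) (s₀ : VS),
      IsStrategy G VEve v₀ S π s₀ ∧ S.Sat (epsObjective W) ∧
      (∀ s s', S.Edge s none s' → mem s = mem s') ∧ Function.Injective fun s => (π s, mem s) := by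
  obtain ⟨M, D, S, s₀, hM, ⟨hS, hmemS⟩, hwin⟩ := hmem V G hG VEve v₀ h
  obtain ⟨e⟩ := hM.trans hK
  refine ⟨_, _, _, fun s => e s.1.1.2, _, hS.restrict_vertexSat hW hne hwin,
    fun s => s.2.restrict s.2, fun s s' he => congrArg e (hmemS s s' he), fun s s' hss' => ?_⟩
  simp only [Prod.mk.injEq, e.injective.eq_iff] at hss'
  exact Subtype.ext (Subtype.ext (Prod.ext hss'.1 hss'.2))

end Strategies

section Peeling

variable {V : Type u}

theorem exists_ordinal_layers (P : Set V → V → Prop) : ∃ g : Ordinal.{u} → Set V,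
    ∀ a v, v ∈ g a ↔ (∀ b < a, v ∉ g b) ∧ P {x | ∀ b < a, x ∉ g b} v := by
  let F : (a : Ordinal.{u}) → (∀ b, b < a → Set V) → Set V := fun a ih =>
    {v | (∀ b (h : b < a), v ∉ ih b h) ∧ P {x | ∀ b (h : b < a), x ∉ ih b h} v}
  exact ⟨WellFoundedLT.fix F, fun a v => Set.ext_iff.1 (WellFoundedLT.fix_eq F a) v⟩

theorem exists_ordinal_rank {P : Set V → V → Prop} (hP : ∀ A, A.Nonempty → ∃ v ∈ A, P A v) :
    ∃ r : V → Ordinal.{u}, ∀ a v, r v = a ↔ a ≤ r v ∧ P {x | a ≤ r x} v := by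
  obtain ⟨g, hg⟩ := exists_ordinal_layers P
  have hunique : ∀ {a b v}, v ∈ g a → v ∈ g b → a = b := by
    intro a b v ha hb
    by_contra hne
    rcases lt_or_gt_of_ne hne with hlt | hlt
    exacts [((hg b v).1 hb).1 a hlt ha, ((hg a v).1 ha).1 b hlt hb]
  have hcover : ∀ v, ∃ a, v ∈ g a := by
    by_contra! ⟨v, hv⟩
    choose h hrem hP using fun a => hP {x | ∀ b < a, x ∉ g b} ⟨v, fun b _ => hv b⟩
    have hh : ∀ a, h a ∈ g a := fun a => (hg a _).2 ⟨hrem a, hP a⟩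
    exact not_injective_of_ordinal h fun a b hab => hunique (hh a) (hab ▸ hh b)
  choose r hr using hcover
  have hremaining : ∀ a, {x | ∀ b < a, x ∉ g b} = {x | a ≤ r x} := fun a => by
    ext x
    refine ⟨fun h => not_lt.1 fun hlt => h _ hlt (hr x), fun h b hb hx => ?_⟩
    exact (hb.trans_le h).ne (hunique hx (hr x))
  refine ⟨r, fun a v => ?_⟩
  rw [← hremaining, ← Set.mem_ofPred_eq (p := fun x => a ≤ r x), ← hremaining]
  exact ⟨fun h => (hg a v).1 (h ▸ hr v), fun h => hunique (hr v) ((hg a v).2 h)⟩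

end Peeling

namespace Pregraph

section Baire

variable {C V : Type u} {T : Pregraph C V}

/-- Extending a finite path by one edge, where a finite path is recorded by its colour sequence
and its endpoint. -/
def PathStep (T : Pregraph C V) (q q' : List C × V) : Prop :=
  ∃ c, q'.1 = q.1 ++ [c] ∧ T.Edge q.2 c q'.2

theorem InfPath.transGen_pathStep {π : ℕ → V} {γ : ℕ → C} (hp : T.InfPath π γ) (u : List C)
    (d : ℕ) : TransGen T.PathStep (u, π 0) (u ++ prefixWord γ (d + 1), π (d + 1)) := by
  induction d with
  | zero => exact .single ⟨γ 0, by simp [prefixWord], hp 0⟩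
  | succ d ih =>
    exact ih.tail ⟨γ (d + 1), by rw [prefixWord_succ γ (d + 1), List.append_assoc], hp (d + 1)⟩

theorem exists_infPath_of_pathStep {f : ℕ → List C × V} (h0 : (f 0).1 = [])
    (hf : ∀ i, T.PathStep (f i) (f (i + 1))) :
    ∃ γ, T.InfPath (fun i => (f i).2) γ ∧ ∀ i, (f i).1 = prefixWord γ i := by
  choose γ hword hedge using hf
  refine ⟨γ, hedge, fun i => ?_⟩
  induction i with
  | zero => simp [h0, prefixWord]
  | succ i ih => rw [hword, ih, prefixWord_succ]

theorem exists_transGen_pathStep_of_not_vertexSat {W : Set (ℕ → C)} (hW : PrefixIndependent W)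
    {B : Set (List C)} (hB : {w | ∀ k, prefixWord w k ∉ B} ⊆ W) {v : V}
    (hv : ¬ T.VertexSat W v) (u : List C) :
    ∃ q, TransGen T.PathStep (u, v) q ∧ ∃ x ∈ B, x <+: q.1 := by
  simp only [VertexSat, not_forall] at hv
  obtain ⟨π, γ, rfl, hp, hγ⟩ := hv
  have hγ' : listAppend u γ ∉ W := (hW u γ).not.2 hγ
  obtain ⟨k, hk⟩ := not_forall_not.1 fun h => hγ' (hB h)
  refine ⟨_, hp.transGen_pathStep u k, _, hk, ?_⟩
  rw [← prefixWord_listAppend]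
  exact prefix_prefixWord_iff.2 ⟨k, by lia, rfl⟩

/-- A Baire category argument: if no vertex satisfies any single `W i`, then from every vertex a
path can be prolonged so as to leave all the closed sets that make up `⋃ i, W i`. -/
theorem Sat.exists_vertexSat {ι : Type*} [Countable ι] [Nonempty ι] [Nonempty V]
    {W : ι → Set (ℕ → C)} (hpi : ∀ i, PrefixIndependent (W i)) (hsig : ∀ i, IsSigmaTwo (W i))
    (hT : T.Sat (⋃ i, W i)) : ∃ v i, T.VertexSat (W i) v := by
  by_contra! hcon
  choose B hB using fun i => isSigmaTwo_iff.1 (hsig i)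
  obtain ⟨e, he⟩ := exists_surjective_nat (ι × ℕ)
  have hclosed : ∀ j, {w | ∀ k, prefixWord w k ∉ B (e j).1 (e j).2} ⊆ W (e j).1 := fun j w hw =>
    hB (e j).1 ▸ ⟨_, hw⟩
  choose next hnext hleave using fun j (q : List C × V) =>
    exists_transGen_pathStep_of_not_vertexSat (hpi _) (hclosed j) (hcon q.2 _) q.1
  let g : ℕ → List C × V := fun j => Nat.rec ([], Classical.arbitrary V) next j
  obtain ⟨f, n, -, hzero, hstep, hf⟩ := exists_seq_interpolating fun j => hnext j (g j)
  obtain ⟨γ, hp, hγ⟩ := exists_infPath_of_pathStep (congrArg Prod.fst (hzero ▸ hf 0)) hstep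
  obtain ⟨i, hi⟩ := Set.mem_iUnion.1 (hT _ _ _ rfl hp)
  rw [hB] at hi
  obtain ⟨m, hm⟩ := hi
  obtain ⟨j, hj⟩ := he (i, m)
  obtain ⟨x, hx, hpre⟩ := hleave j (g j)
  have hpre' : x <+: prefixWord γ (n (j + 1)) := by rwa [← hγ, hf]
  obtain ⟨k, -, rfl⟩ := prefix_prefixWord_iff.1 hpre'
  rw [hj] at hx
  exact hm k hx

theorem Sat.exists_ranking {ι : Type*} [Countable ι] [Nonempty ι] {W : ι → Set (ℕ → C)}
    (hpi : ∀ i, PrefixIndependent (W i)) (hsig : ∀ i, IsSigmaTwo (W i)) (hT : T.Sat (⋃ i, W i)) :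
    ∃ ρ : V → Ordinal.{u}, (∀ v c v', T.Edge v c v' → ρ v' ≤ ρ v) ∧
      ∀ l, ∃ i, (T.restrict {v | ρ v = l}).Sat (W i) := by
  have hbaire : ∀ Z : Set V, ∃ i, Z.Nonempty →
      ∃ v, ∃ h : v ∈ Z, (T.restrict Z).VertexSat (W i) ⟨v, h⟩ := by
    intro Z
    rcases Z.eq_empty_or_nonempty with rfl | hZ
    · exact ⟨Classical.arbitrary ι, fun h => absurd h Set.not_nonempty_empty⟩
    · have := hZ.to_subtype
      obtain ⟨⟨v, hv⟩, i, hi⟩ :=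
        Sat.exists_vertexSat hpi hsig fun v : Z => (hT v).restrict v.2
      exact ⟨i, fun _ => ⟨v, hv, hi⟩⟩
  choose i hi using hbaire
  obtain ⟨ρ, hρ⟩ := exists_ordinal_rank
    (P := fun Z v => ∃ h : v ∈ Z, (T.restrict Z).VertexSat (W (i Z)) ⟨v, h⟩)
    fun Z hZ => let ⟨v, hv, hsat⟩ := hi Z hZ; ⟨v, hv, hv, hsat⟩
  refine ⟨ρ, fun v c v' he => ?_, fun l => ⟨i {x | l ≤ ρ x}, fun v => ?_⟩⟩
  · by_contra hlt
    have hle : ρ v ≤ ρ v' := (not_le.1 hlt).le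
    obtain ⟨-, _, hsat⟩ := (hρ (ρ v) v).1 rfl
    exact hlt ((hρ (ρ v) v').2 ⟨hle, hle, hsat.of_edge (hpi _) he⟩).le
  · obtain ⟨-, _, hsat⟩ := (hρ l v).1 v.2
    exact .of_isMorphism (H := T.restrict {x | l ≤ ρ x}) (φ := fun v => ⟨v, v.2.ge⟩)
      (fun _ _ _ he => he) hsat

end Baire

end Pregraph

section Simulations

variable {C V : Type u} {K X Λ : Type*}

/-- A simulation of `T` by a graph on `K × X` satisfying `W` which is monotone in the second
component. This is the relational form of a morphism from `T` to an `ε`-separated monotone graph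
with fibres `{k} × X`, the order of each fibre playing the role of its `ε`-edges; a relation is
used in place of a map because `T` is not assumed to be a tree. -/
structure MonotoneSimulation (T : Pregraph C V) (W : Set (ℕ → C)) (K X : Type*) [Preorder X] where
  /-- The edges of the monotone graph. -/
  Edge : K → X → C → K → X → Prop
  /-- The vertices of the monotone graph that simulate a vertex of `T`. -/
  Sim : V → K → X → Prop
  mono : ∀ {k x c k' x' y y'}, Edge k x c k' x' → x ≤ y → y' ≤ x' → Edge k y c k' y'
  mem_of_path : ∀ {k : ℕ → K} {x : ℕ → X} {γ : ℕ → C},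
    (∀ i, Edge (k i) (x i) (γ i) (k (i + 1)) (x (i + 1))) → γ ∈ W
  total : ∀ v, ∃ k x, Sim v k x
  step : ∀ {v k x c v'}, Sim v k x → T.Edge v c v' → ∃ k' x', Sim v' k' x' ∧ Edge k x c k' x'

/-- The lexicographic sum of a family of monotone graphs on `K × X`: an edge decreases the index,
or stays in the graph of the current index. -/
def LexEdge [LT Λ] (E : Λ → K → X → C → K → X → Prop) (k : K) (x : Λ ×ₗ X) (c : C) (k' : K)
    (x' : Λ ×ₗ X) : Prop :=
  (ofLex x').1 < (ofLex x).1 ∨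
    (ofLex x').1 = (ofLex x).1 ∧ E (ofLex x).1 k (ofLex x).2 c k' (ofLex x').2

theorem LexEdge.mono [Preorder Λ] [Preorder X] {E : Λ → K → X → C → K → X → Prop}
    (hE : ∀ {l k x c k' x' y y'}, E l k x c k' x' → x ≤ y → y' ≤ x' → E l k y c k' y')
    {k k' : K} {x x' y y' : Λ ×ₗ X} {c : C} (h : LexEdge E k x c k' x') (hxy : x ≤ y)
    (hyx : y' ≤ x') : LexEdge E k y c k' y' := by
  rw [Prod.Lex.le_iff] at hxy hyx
  rcases h with hlt | ⟨heq, he⟩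
  · exact .inl ((hyx.elim le_of_lt fun h => h.1.le).trans_lt
      (hlt.trans_le (hxy.elim le_of_lt fun h => h.1.le)))
  · rcases hxy with hxy | ⟨hxy, hxy'⟩ <;> rcases hyx with hyx | ⟨hyx, hyx'⟩
    · exact .inl ((hyx.trans_eq heq).trans hxy)
    · exact .inl ((hyx.trans heq).trans_lt hxy)
    · exact .inl (hyx.trans_eq (heq.trans hxy))
    · exact .inr ⟨(hyx.trans heq).trans hxy, hxy ▸ hE he hxy' hyx'⟩

theorem LexEdge.eventually_of_path [PartialOrder Λ] [WellFoundedLT Λ]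
    {E : Λ → K → X → C → K → X → Prop} {k : ℕ → K} {x : ℕ → Λ ×ₗ X} {γ : ℕ → C}
    (h : ∀ i, LexEdge E (k i) (x i) (γ i) (k (i + 1)) (x (i + 1))) :
    ∃ l N, ∀ i ≥ N, E l (k i) (ofLex (x i)).2 (γ i) (k (i + 1)) (ofLex (x (i + 1))).2 := by
  have hanti : Antitone fun i => (ofLex (x i)).1 :=
    antitone_nat_of_succ_le fun i => (h i).elim le_of_lt fun h => h.1.le
  obtain ⟨N, hN⟩ := WellFoundedLT.antitone_chain_condition hanti
  refine ⟨(ofLex (x N)).1, N, fun i hi => ?_⟩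
  rcases h i with hlt | ⟨-, he⟩
  · exact absurd ((hN _ hi).symm.trans (hN _ (hi.trans i.le_succ))) hlt.ne'
  · rwa [hN i hi]

/-- If `ρ` decreases along the edges of `T`, simulations of the layers of `ρ` assemble to a
simulation of `T`: a path of the lexicographic sum eventually stays in one layer. -/
def MonotoneSimulation.lex [PartialOrder Λ] [WellFoundedLT Λ] [Preorder X] {T : Pregraph C V}
    {ρ : V → Λ} (hρ : ∀ v c v', T.Edge v c v' → ρ v' ≤ ρ v) {W : Set (ℕ → C)}
    (hW : PrefixIndependent W) {Wₗ : Λ → Set (ℕ → C)} (hsub : ∀ l, Wₗ l ⊆ W)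
    (sim : ∀ l, MonotoneSimulation (T.restrict {v | ρ v = l}) (Wₗ l) K X) :
    MonotoneSimulation T W K (Λ ×ₗ X) where
  Edge := LexEdge fun l => (sim l).Edge
  Sim v k x := ∃ h : ρ v = (ofLex x).1, (sim (ofLex x).1).Sim ⟨v, h⟩ k (ofLex x).2
  mono := LexEdge.mono (E := fun l => (sim l).Edge) fun h => (sim _).mono h
  mem_of_path {k x γ} h := by
    obtain ⟨l, N, hl⟩ := LexEdge.eventually_of_path h
    refine (hW.shift_mem_iff γ N).1 (hsub l ?_)
    refine (sim l).mem_of_path (k := fun i => k (i + N)) (x := fun i => (ofLex (x (i + N))).2)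
      fun i => ?_
    simpa only [Nat.add_right_comm] using hl (i + N) (Nat.le_add_left N i)
  total v := by
    obtain ⟨k, x, h⟩ := (sim (ρ v)).total ⟨v, rfl⟩
    exact ⟨k, toLex (ρ v, x), rfl, h⟩
  step {v k x c v'} := by
    rintro ⟨h, hsim⟩ he
    rcases (hρ v c v' he).lt_or_eq with hlt | heq
    · obtain ⟨k', x', h'⟩ := (sim (ρ v')).total ⟨v', rfl⟩
      exact ⟨k', toLex (ρ v', x'), ⟨rfl, h'⟩, .inl (hlt.trans_eq h)⟩
    · obtain ⟨k', x', h', he'⟩ := (sim (ofLex x).1).step (v' := ⟨v', heq.trans h⟩) hsim he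
      exact ⟨k', toLex ((ofLex x).1, x'), ⟨heq.trans h, h'⟩, .inr ⟨rfl, he'⟩⟩

end Simulations

section ChoiceGame

variable {C V : Type u} {T : Pregraph C V} {W : Set (ℕ → C)}

/-- The positions of the choice game of a pregraph: a token lies on some vertex, or Eve is offered
a set of vertices among which she has to place it. -/
inductive ChoicePosition (V : Type u) : Type u
  | start : ChoicePosition V
  | token : V → ChoicePosition V
  | offer (A : Set V) (hA : A.Nonempty) : ChoicePosition V

/-- The moves of the choice game of `T`. Adam places the token anywhere and then moves it along the
edges of `T`; at any time he may offer Eve a set containing the current vertex, from which she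
chooses a new one. -/
inductive ChoiceEdge (T : Pregraph C V) :
    ChoicePosition V → Option C → ChoicePosition V → Prop
  | wait : ChoiceEdge T .start none .start
  | place (v : V) : ChoiceEdge T .start none (.token v)
  | offer (v : V) (A : Set V) (hv : v ∈ A) : ChoiceEdge T (.token v) none (.offer A ⟨v, hv⟩)
  | choose (v : V) (A : Set V) (hv : v ∈ A) : ChoiceEdge T (.offer A ⟨v, hv⟩) none (.token v)
  | move (v : V) (c : C) (v' : V) : T.Edge v c v' → ChoiceEdge T (.token v) (some c) (.token v')

/-- The choice game of `T`, in which Eve controls the positions `ChoicePosition.offer`. -/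
def choiceGame (T : Pregraph C V) : Pregraph (Option C) (ChoicePosition V) :=
  ⟨ChoiceEdge T⟩

/-- The positions of the choice game controlled by Eve. -/
def evePositions (V : Type u) : Set (ChoicePosition V) :=
  {p | ∃ A hA, p = .offer A hA}

theorem start_notMem_evePositions : .start ∉ evePositions V := by
  rintro ⟨A, hA, h⟩
  cases h

theorem token_notMem_evePositions (v : V) : .token v ∉ evePositions V := by
  rintro ⟨A, hA, h⟩
  cases h

theorem choiceGame_noSinks (T : Pregraph C V) : (choiceGame T).NoSinks
  | .start => ⟨_, _, .wait⟩
  | .token v => ⟨_, _, .offer v {v} rfl⟩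
  | .offer A ⟨v, hv⟩ => ⟨_, _, .choose v A hv⟩

/-- The states of the strategy of Eve in the choice game that always puts the token back where it
was, which has to be remembered in a position `ChoicePosition.offer`. -/
inductive ReturnState (V : Type u) : Type u
  | start : ReturnState V
  | token : V → ReturnState V
  | offer (v : V) (A : Set V) (hv : v ∈ A) : ReturnState V

/-- The edges of the strategy of Eve in the choice game that always puts the token back where it
was. -/
inductive ReturnEdge (T : Pregraph C V) : ReturnState V → Option C → ReturnState V → Prop
  | wait : ReturnEdge T .start none .start
  | place (v : V) : ReturnEdge T .start none (.token v)
  | offer (v : V) (A : Set V) (hv : v ∈ A) : ReturnEdge T (.token v) none (.offer v A hv)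
  | choose (v : V) (A : Set V) (hv : v ∈ A) : ReturnEdge T (.offer v A hv) none (.token v)
  | move (v : V) (c : C) (v' : V) : T.Edge v c v' → ReturnEdge T (.token v) (some c) (.token v')

namespace ReturnState

/-- The position of the choice game that underlies a state. -/
def position : ReturnState V → ChoicePosition V
  | start => .start
  | token v => .token v
  | offer v A hv => .offer A ⟨v, hv⟩

/-- The vertex of the token, if it has already been placed. -/
def vertex : ReturnState V → Option V
  | start => none
  | token v => some v
  | offer v _ _ => some v

end ReturnState

theorem returnEdge_isStrategy (T : Pregraph C V) :
    IsStrategy (choiceGame T) (evePositions V) .start ⟨ReturnEdge T⟩ ReturnState.position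
      .start := by
  refine ⟨?_, ?_, rfl, ?_⟩
  · rintro (_ | v | ⟨v, A, hv⟩)
    exacts [⟨_, _, .wait⟩, ⟨_, _, .offer v {v} rfl⟩, ⟨_, _, .choose v A hv⟩]
  · rintro _ _ _ (_ | v | ⟨v, A, hv⟩ | ⟨v, A, hv⟩ | ⟨v, c, v', he⟩)
    exacts [.wait, .place v, .offer v A hv, .choose v A hv, .move v c v' he]
  · rintro _ hp _ _ (_ | v | ⟨v, A, hv⟩ | ⟨v, A, hv⟩ | ⟨v, c, v', he⟩) s hs
    case choose => exact absurd ⟨A, ⟨v, hv⟩, rfl⟩ hp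
    all_goals cases s <;> simp only [ReturnState.position, reduceCtorEq] at hs
    · exact ⟨.start, rfl, .wait⟩
    · exact ⟨.token v, rfl, .place v⟩
    · cases hs
      exact ⟨.offer v A hv, rfl, .offer v A hv⟩
    · cases hs
      exact ⟨.token v', rfl, .move v c v' he⟩

theorem ReturnEdge.vertex_eq_of_reflTransGen {s s' : ReturnState V} {v : V}
    (h : ReflTransGen (ReturnEdge T · none ·) s s') (hs : s.vertex = some v) :
    s'.vertex = some v := by
  induction h with
  | refl => exact hs
  | tail _ he ih =>
    cases he with
    | wait => exact ih
    | place => cases ih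
    | offer => exact ih
    | choose => exact ih

theorem returnEdge_epsContraction_edge {s s' : ReturnState V} {c : C}
    (h : (Pregraph.mk (ReturnEdge T)).epsContraction.Edge s c s') :
    ∃ v v', T.Edge v c v' ∧ s'.vertex = some v' ∧ ∀ v₁, s.vertex = some v₁ → v₁ = v := by
  obtain ⟨a, ha, he⟩ := h
  cases he with | move v _ v' he =>
  exact ⟨v, v', he, rfl, fun v₁ hv₁ =>
    (Option.some_injective _ (ReturnEdge.vertex_eq_of_reflTransGen ha hv₁)).symm⟩

theorem eveWins_choiceGame (hW : PrefixIndependent W) (hne : W.Nonempty) (hT : T.Sat W) :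
    EveWins (choiceGame T) (evePositions V) .start (epsObjective W) := by
  refine ⟨_, _, _, _, returnEdge_isStrategy T, .of_epsContraction hW hne fun π γ _ hp => ?_⟩
  choose v v' hedge hv' hv using fun i => returnEdge_epsContraction_edge (hp i)
  refine hT (v 0) v γ rfl fun i => ?_
  rw [← hv (i + 1) (v' i) (hv' i)]
  exact hedge i

end ChoiceGame

section ChoiceGameStrategies

variable {C V VS : Type u} {K : Type*} {T : Pregraph C V} {W : Set (ℕ → C)}
  {S : Pregraph (Option C) VS} {π : VS → ChoicePosition V} {mem : VS → K} {s₀ : VS}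

/-- The answers of Eve to the offers made at memory `k` peel off the vertices one after another,
which ranks them: if the token is on `w` and `v` has a smaller rank, Adam can have it brought to
`v` by offering all the vertices ranked at least as high as `v`. -/
theorem exists_rank_of_isStrategy_choiceGame
    (hS : IsStrategy (choiceGame T) (evePositions V) .start S π s₀)
    (hmem : ∀ s s', S.Edge s none s' → mem s = mem s')
    (hinj : Function.Injective fun s => (π s, mem s)) (k : K) :
    ∃ r : V → Ordinal.{u}, ∀ s v w, π s = .token w → mem s = k → r v ≤ r w →
      ∃ s', ReflTransGen (S.Edge · none ·) s s' ∧ π s' = .token v ∧ mem s' = k := by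
  obtain ⟨hsinks, hmorph, -, hadam⟩ := hS
  obtain ⟨r, hr⟩ := exists_ordinal_rank (P := fun A v => ∀ s hA, π s = .offer A hA → mem s = k →
    ∃ s', S.Edge s none s' ∧ π s' = .token v ∧ mem s' = k) <| by
    intro A hA
    by_cases hs : ∃ s, π s = .offer A hA ∧ mem s = k
    · obtain ⟨s, hs, rfl⟩ := hs
      obtain ⟨o, s', he⟩ := hsinks s
      have hmove : ChoiceEdge T (π s) o (π s') := hmorph he
      generalize hs' : π s' = p at hmove
      rw [hs] at hmove
      cases hmove with | choose v _ hv =>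
      refine ⟨v, hv, fun t hA ht hts => ⟨s', ?_, hs', (hmem s s' he).symm⟩⟩
      rwa [hinj (Prod.ext (ht.trans hs.symm) hts)]
    · exact hA.imp fun v hv => ⟨hv, fun s hA h h' => absurd ⟨s, h, h'⟩ hs⟩
  refine ⟨r, fun s v w hs hk hvw => ?_⟩
  obtain ⟨t, ht, hst⟩ := hadam _ (token_notMem_evePositions w) _ _
    (.offer w {x | r v ≤ r x} hvw) s hs
  obtain ⟨s', hts', hs', hk'⟩ := ((hr (r v) v).1 rfl).2 t _ ht ((hmem s t hst).symm.trans hk)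
  exact ⟨s', .head hst (.single hts'), hs', hk'⟩

theorem nonempty_monotoneSimulation_of_isStrategy_choiceGame (hW : PrefixIndependent W)
    (hS : IsStrategy (choiceGame T) (evePositions V) .start S π s₀)
    (hsat : S.Sat (epsObjective W)) (hmem : ∀ s s', S.Edge s none s' → mem s = mem s')
    (hinj : Function.Injective fun s => (π s, mem s)) :
    Nonempty (MonotoneSimulation T W K Ordinal.{u}) := by
  choose r hr using exists_rank_of_isStrategy_choiceGame hS hmem hinj
  obtain ⟨-, -, hstart, hadam⟩ := hS
  refine ⟨{
    Edge k x c k' x' := ∃ s s' v v', (π s = .token v ∧ mem s = k ∧ r k v ≤ x) ∧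
      (π s' = .token v' ∧ mem s' = k' ∧ x' ≤ r k' v') ∧ S.Edge s (some c) s'
    Sim v k x := ∃ s, π s = .token v ∧ mem s = k ∧ r k v = x
    mono := ?_, mem_of_path := ?_, total := ?_, step := ?_ }⟩
  · rintro k x c k' x' y y' ⟨s, s', v, v', ⟨hs, hk, hx⟩, ⟨hs', hk', hx'⟩, he⟩ hxy hyx
    exact ⟨s, s', v, v', ⟨hs, hk, hx.trans hxy⟩, ⟨hs', hk', hyx.trans hx'⟩, he⟩
  · intro k x γ h
    choose s s' v v' hs hs' he using h
    refine (hW.shift_mem_iff γ 1).1 ((hsat (s' 0)).epsContraction s' _ rfl fun i => ?_)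
    obtain ⟨hv, hk, hle⟩ := hs (i + 1)
    obtain ⟨hv', hk', hle'⟩ := hs' i
    obtain ⟨t, hst, ht, htk⟩ := hr _ (s' i) (v (i + 1)) (v' i) hv' hk' (hle.trans hle')
    obtain rfl : t = s (i + 1) := hinj (Prod.ext (ht.trans hv.symm) (htk.trans hk.symm))
    exact ⟨_, hst, he (i + 1)⟩
  · intro v
    obtain ⟨s, hs, -⟩ := hadam _ start_notMem_evePositions _ _ (.place v) s₀ hstart
    exact ⟨mem s, r (mem s) v, s, hs, rfl, rfl⟩
  · rintro v k x c v' ⟨s, hs, rfl, rfl⟩ he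
    obtain ⟨s', hs', he'⟩ := hadam _ (token_notMem_evePositions v) _ _ (.move v c v' he) s hs
    exact ⟨mem s', r (mem s') v', ⟨s', hs', rfl, rfl⟩, s, s', v, v',
      ⟨hs, rfl, le_rfl⟩, ⟨hs', rfl, le_rfl⟩, he'⟩

theorem ObjEpsMemLE.nonempty_monotoneSimulation {μ : Cardinal.{u}} (hmem : ObjEpsMemLE W μ)
    (hW : PrefixIndependent W) (hne : W.Nonempty) {K : Type u} (hK : μ ≤ #K) (hT : T.Sat W) :
    Nonempty (MonotoneSimulation T W K Ordinal.{u}) := by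
  obtain ⟨VS, S, π, mem, s₀, hS, hsat, hmemS, hinj⟩ := hmem.exists_strategy_sat hW hne hK
    (choiceGame_noSinks T) (eveWins_choiceGame hW hne hT)
  exact nonempty_monotoneSimulation_of_isStrategy_choiceGame hW hS hsat hmemS hinj

end ChoiceGameStrategies

namespace MonotoneSimulation

section ProductStrategy

variable {C V VS K : Type u} {X : Type*} {W : Set (ℕ → C)} {S : Pregraph (Option C) VS}
  {G : Pregraph (Option C) V} {VEve : Set V} {v₀ : V} {π : VS → V} {s₀ : VS}

/-- Simulation of a state that is reached by `ε`-edges from a state simulated by `(k, x)`. -/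
def EpsSim [Preorder X] (sim : MonotoneSimulation S.epsContraction W K X) (s : VS) (k : K)
    (x : X) : Prop :=
  ∃ s₁, sim.Sim s₁ k x ∧ ReflTransGen (S.Edge · none ·) s₁ s

/-- The ranks at which some state above the vertex `p.1` is simulated with memory `p.2`. -/
def ranksAt [Preorder X] (sim : MonotoneSimulation S.epsContraction W K X) (π : VS → V)
    (p : V × K) : Set X :=
  {x | ∃ s, π s = p.1 ∧ sim.EpsSim s p.2 x}

/-- The pairs of a vertex and a memory value at which some state is simulated. -/
def domain [Preorder X] (sim : MonotoneSimulation S.epsContraction W K X) (π : VS → V) :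
    Set (V × K) :=
  {p | (sim.ranksAt π p).Nonempty}

/-- The edges of `G` along which a given ranking of the pairs of a vertex and a memory value
follows the monotone graph of a simulation, non-increasing ranks being its `ε`-edges. -/
def product [Preorder X] {T : Pregraph C VS} (sim : MonotoneSimulation T W K X)
    (G : Pregraph (Option C) V) {D : Set (V × K)} (rank : D → X) : Pregraph (Option C) ↥D where
  Edge p o p' := G.Edge p.1.1 o p'.1.1 ∧ (o = none → p.1.2 = p'.1.2 ∧ rank p' ≤ rank p) ∧
    ∀ c ∈ o, sim.Edge p.1.2 (rank p) c p'.1.2 (rank p')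

theorem product_epsContraction_edge [Preorder X] {T : Pregraph C VS}
    (sim : MonotoneSimulation T W K X) {D : Set (V × K)} {rank : D → X} {p p' : D} {c : C}
    (h : (sim.product G rank).epsContraction.Edge p c p') :
    sim.Edge p.1.2 (rank p) c p'.1.2 (rank p') := by
  obtain ⟨q, hq, he⟩ := h
  induction hq using ReflTransGen.head_induction_on with
  | refl => exact he.2.2 c rfl
  | head he _ ih =>
    obtain ⟨hmem, hrank⟩ := he.2.1 rfl
    exact hmem ▸ sim.mono ih hrank le_rfl

theorem product_sat [Preorder X] {T : Pregraph C VS} (sim : MonotoneSimulation T W K X)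
    (hW : PrefixIndependent W) (hne : W.Nonempty) {D : Set (V × K)} (rank : D → X) :
    (sim.product G rank).Sat (epsObjective W) := fun _ =>
  .of_epsContraction hW hne fun _ _ _ hp =>
    sim.mem_of_path fun i => sim.product_epsContraction_edge (hp i)

theorem exists_product_edge [Preorder X] (sim : MonotoneSimulation S.epsContraction W K X)
    (hπ : S.IsMorphism G π) {rank : sim.domain π → X}
    (hrank : ∀ p : sim.domain π, IsLeast (sim.ranksAt π p) (rank p)) {p : sim.domain π}
    {s s' : VS} {o : Option C} (hs : π s = p.1.1) (hsim : sim.EpsSim s p.1.2 (rank p))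
    (he : S.Edge s o s') : ∃ p', p'.1.1 = π s' ∧ (sim.product G rank).Edge p o p' := by
  obtain ⟨s₁, hs₁, hε⟩ := hsim
  have hG : G.Edge p.1.1 o (π s') := hs ▸ hπ he
  cases o with
  | none =>
    have hx : rank p ∈ sim.ranksAt π (π s', p.1.2) := ⟨s', rfl, s₁, hs₁, hε.tail he⟩
    exact ⟨⟨(π s', p.1.2), _, hx⟩, rfl, hG, fun _ => ⟨rfl, (hrank ⟨_, _, hx⟩).2 hx⟩, nofun⟩
  | some c =>
    obtain ⟨k', x', hs', he'⟩ := sim.step hs₁ ⟨s, hε, he⟩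
    have hx : x' ∈ sim.ranksAt π (π s', k') := ⟨s', rfl, s', hs', .refl⟩
    refine ⟨⟨(π s', k'), _, hx⟩, rfl, hG, nofun, ?_⟩
    rintro _ ⟨⟩
    exact sim.mono he' le_rfl ((hrank ⟨_, _, hx⟩).2 hx)

theorem exists_isEpsStrategy [LinearOrder X] [WellFoundedLT X]
    (sim : MonotoneSimulation S.epsContraction W K X) (hS : IsStrategy G VEve v₀ S π s₀)
    (hW : PrefixIndependent W) (hne : W.Nonempty) :
    ∃ (D : Set (V × K)) (S' : Pregraph (Option C) ↥D) (p₀ : ↥D),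
      IsEpsStrategy G VEve v₀ D S' p₀ ∧ S'.VertexSat (epsObjective W) p₀ := by
  have hleast : ∀ p : sim.domain π, ∃ x, IsLeast (sim.ranksAt π p) x :=
    fun p => ⟨_, WellFounded.min_mem wellFounded_lt _ p.2, fun _ hx =>
      WellFounded.min_le wellFounded_lt hx⟩
  choose rank hrank using hleast
  obtain ⟨hsinks, hmorph, rfl, hadam⟩ := hS
  obtain ⟨k₀, x₀, h₀⟩ := sim.total s₀
  refine ⟨_, sim.product G rank, ⟨(π s₀, k₀), x₀, s₀, rfl, s₀, h₀, .refl⟩,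
    ⟨⟨fun p => ?_, fun _ _ _ he => he.1, rfl, fun v hv c v' he p hp => ?_⟩,
      fun _ _ he => (he.2.1 rfl).1⟩, sim.product_sat hW hne rank _⟩
  · obtain ⟨s, hs, hsim⟩ := (hrank p).1
    obtain ⟨o, s', he⟩ := hsinks s
    obtain ⟨p', -, he'⟩ := sim.exists_product_edge hmorph hrank hs hsim he
    exact ⟨o, p', he'⟩
  · obtain ⟨s, hs, hsim⟩ := (hrank p).1
    obtain ⟨s', rfl, he'⟩ := hadam v hv c v' he s (hs.trans hp)
    exact sim.exists_product_edge hmorph hrank hs hsim he'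

end ProductStrategy

end MonotoneSimulation

section CountableUnions

variable {C : Type u} {ι : Type*} {W : ι → Set (ℕ → C)}

theorem EveWins.nonempty {V : Type u} {G : Pregraph (Option C) V} {VEve : Set V} {v₀ : V}
    {W : Set (ℕ → C)} (h : EveWins G VEve v₀ (epsObjective W)) : W.Nonempty := by
  obtain ⟨VS, S, π, s₀, hS, hwin⟩ := h
  obtain ⟨p, w, h0, hp⟩ := hS.1.exists_infPath s₀
  obtain ⟨w', -, hw'⟩ := hwin p w h0 hp
  exact ⟨w', hw'⟩

theorem Pregraph.Sat.nonempty_monotoneSimulation_iUnion [Countable ι] [Nonempty ι] {V : Type u}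
    {T : Pregraph C V} {μ : Cardinal.{u}} (hpi : ∀ i, PrefixIndependent (W i))
    (hsig : ∀ i, IsSigmaTwo (W i)) (hne : ∀ i, (W i).Nonempty) (hmem : ∀ i, ObjEpsMemLE (W i) μ)
    {K : Type u} (hK : μ ≤ #K) (hT : T.Sat (⋃ i, W i)) :
    Nonempty (MonotoneSimulation T (⋃ i, W i) K (Ordinal.{u} ×ₗ Ordinal.{u})) := by
  obtain ⟨ρ, hρ, hlayer⟩ := hT.exists_ranking hpi hsig
  choose i hi using hlayer
  have sim := fun l => (hmem (i l)).nonempty_monotoneSimulation (hpi _) (hne _) hK (hi l)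
  exact ⟨.lex hρ (.iUnion hpi) (fun l => Set.subset_iUnion W (i l)) fun l => (sim l).some⟩

theorem ObjEpsMemLE.iUnion_of_nonempty [Countable ι] [Nonempty ι] {μ : Cardinal.{u}}
    (hpi : ∀ i, PrefixIndependent (W i)) (hsig : ∀ i, IsSigmaTwo (W i))
    (hne : ∀ i, (W i).Nonempty) (hmem : ∀ i, ObjEpsMemLE (W i) μ) :
    ObjEpsMemLE (⋃ i, W i) μ := by
  intro V G _ VEve v₀ h
  have hpi' := PrefixIndependent.iUnion hpi
  obtain ⟨VS, S, π, s₀, hS, hsat⟩ := h.exists_strategy_sat hpi' h.nonempty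
  obtain ⟨sim⟩ := Pregraph.Sat.nonempty_monotoneSimulation_iUnion hpi hsig hne hmem
    (Cardinal.mk_out μ).ge fun s => (hsat s).epsContraction
  obtain ⟨D, S', p₀, hS', hwin⟩ := sim.exists_isEpsStrategy hS hpi' h.nonempty
  exact ⟨μ.out, D, S', p₀, (Cardinal.mk_out μ).le, hS', hwin⟩

theorem ObjEpsMemLE.iUnion [Countable ι] {μ : Cardinal.{u}}
    (hpi : ∀ i, PrefixIndependent (W i)) (hsig : ∀ i, IsSigmaTwo (W i))
    (hmem : ∀ i, ObjEpsMemLE (W i) μ) : ObjEpsMemLE (⋃ i, W i) μ := by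
  intro V G hG VEve v₀ h
  obtain ⟨w, hw⟩ := h.nonempty
  obtain ⟨i₀, hi₀⟩ := Set.mem_iUnion.1 hw
  have hunion : ⋃ i, W i = ⋃ i : {i // (W i).Nonempty}, W i := by
    ext x
    simp only [Set.mem_iUnion]
    exact ⟨fun ⟨i, hi⟩ => ⟨⟨i, x, hi⟩, hi⟩, fun ⟨i, hi⟩ => ⟨i, hi⟩⟩
  have : Nonempty {i // (W i).Nonempty} := ⟨i₀, w, hi₀⟩
  rw [hunion] at h ⊢
  exact ObjEpsMemLE.iUnion_of_nonempty (W := fun i : {i // (W i).Nonempty} => W i) (fun i => hpi i)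
    (fun i => hsig i) (fun i => i.2) (fun i => hmem i) V G hG VEve v₀ h

end CountableUnions

theorem sigma2_union_epsMemory_general {C : Type u} {ι : Type*} [Countable ι] (μ : Cardinal.{u})
    (W : ι → Set (ℕ → C)) (hpi : ∀ i, PrefixIndependent (W i)) (hsig : ∀ i, IsSigmaTwo (W i))
    (hmem : ∀ i, ObjEpsMemLE (W i) μ) :
    PrefixIndependent (⋃ i, W i) ∧ IsSigmaTwo (⋃ i, W i) ∧ ObjEpsMemLE (⋃ i, W i) μ :=
  ⟨.iUnion hpi, .iUnion hsig, .iUnion hpi hsig hmem⟩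

/-- Prefix-independent Σ⁰₂ objectives with ε-memory ≤ m are closed
under countable unions. -/
theorem sigma2_union_epsMemory
    {C : Type u} (m : ℕ) (W : ℕ → Set (ℕ → C))
    (hpi : ∀ i, PrefixIndependent (W i))
    (hsig : ∀ i, IsSigmaTwo (W i))
    (hmem : ∀ i, ObjEpsMemLE (W i) (m : Cardinal.{u})) :
    PrefixIndependent (⋃ i, W i) ∧ IsSigmaTwo (⋃ i, W i) ∧
    ObjEpsMemLE (⋃ i, W i) (m : Cardinal.{u}) :=
  sigma2_union_epsMemory_general m W hpi hsig hmem
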